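/- Let c and s be positive integers and μ a real number with 0 < μ < 1, and define α(u,v) = binom(c,u)·μ^u·(1-μ)^{c-u}·binom(s,v)·μ^v·(1-μ)^{s-v} for 0 ≤ u ≤ c and 0 ≤ v ≤ s. For an integer n with 0 ≤ n ≤ c+s, let S_n = {(u,v) : 0 ≤ u ≤ c, 0 ≤ v ≤ s, u+v = n}. Then the sum over (u,v) in S_n of (c-u)·α(u,v) equals binom(c+s, n)·μ^n·(1-μ)^{c+s-n}·c·(c+s-n)/(c+s). -/

import Mathlib

/-!
Absorption, `(c - u) * binom(c, u) = c * binom(c - 1, u)`, turns the sum over `u + v = n` into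
`c μ^n (1 - μ)^(c+s-n) ∑ binom(c - 1, u) binom(s, v)`, which Vandermonde's identity evaluates
with `binom(c + s - 1, n)`. Absorption again, now with `c + s` in place of `c`, rewrites
`binom(c + s - 1, n)` as `binom(c + s, n) (c + s - n) / (c + s)`.
-/

open Finset

/-- The product-of-binomials distribution `α(u,v)` on the state space. -/
noncomputable def alpha (c s : ℕ) (μ : ℝ) (u v : ℕ) : ℝ :=
  (c.choose u : ℝ) * μ ^ u * (1 - μ) ^ (c - u) * ((s.choose v : ℝ) * μ ^ v * (1 - μ) ^ (s - v))

/-- Absorption identity over `ℝ`, where the subtraction is not truncated; it also holds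
for `k > m + 1`, since both binomial coefficients then vanish. -/
lemma sub_mul_choose_succ (m k : ℕ) :
    ((m : ℝ) + 1 - k) * ((m + 1).choose k : ℝ) = ((m : ℝ) + 1) * (m.choose k : ℝ) := by
  rcases le_or_gt k (m + 1) with h | h
  · have := congrArg (Nat.cast (R := ℝ)) (Nat.choose_mul_succ_eq m k)
    push_cast [Nat.cast_sub h] at this
    linarith
  · rw [Nat.choose_eq_zero_of_lt h, Nat.choose_eq_zero_of_lt (by omega : m < k)]
    simp

/-- Vandermonde's identity summed over the box `[0, d + 1] × [0, s]`, which is one larger than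
the support of `binom(d, u)` in the first coordinate. -/
lemma sum_box_choose_mul_choose (d s n : ℕ) :
    ∑ p ∈ (Finset.range (d + 1 + 1) ×ˢ Finset.range (s + 1)).filter (fun p => p.1 + p.2 = n),
      ((d.choose p.1 : ℝ) * (s.choose p.2 : ℝ)) = ((d + s).choose n : ℝ) := by
  rw [Nat.add_choose_eq]
  push_cast
  apply Finset.sum_subset
  · intro p hp
    simp only [mem_filter] at hp
    exact HasAntidiagonal.mem_antidiagonal.2 hp.2
  · intro p hp hnot
    simp only [mem_filter, mem_product, mem_range, HasAntidiagonal.mem_antidiagonal] at hp hnot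
    rcases lt_or_ge d p.1 with h | h
    · simp [Nat.choose_eq_zero_of_lt h]
    · simp [Nat.choose_eq_zero_of_lt (by omega : s < p.2)]

/-- `∑_{(u,v) ∈ S_n} (c-u)·α(u,v) = binom(c+s,n) μ^n (1-μ)^{c+s-n} · c(c+s-n)/(c+s)`, where
`S_n = {(u,v) : 0 ≤ u ≤ c, 0 ≤ v ≤ s, u+v = n}`. -/
theorem sum_c_sub_u_alpha (c s : ℕ) (hc : 0 < c) (hs : 0 < s)
    (μ : ℝ) (hμ0 : 0 < μ) (hμ1 : μ < 1) (n : ℕ) (hn : n ≤ c + s) :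
    ∑ p ∈ (Finset.range (c + 1) ×ˢ Finset.range (s + 1)).filter (fun p => p.1 + p.2 = n),
        ((c : ℝ) - p.1) * alpha c s μ p.1 p.2
      = ((c + s).choose n : ℝ) * μ ^ n * (1 - μ) ^ (c + s - n) * ((c : ℝ) * (((c : ℝ) + s) - n) / ((c : ℝ) + s)) := by
  obtain ⟨d, rfl⟩ : ∃ d, c = d + 1 := ⟨c - 1, by omega⟩
  have hterm : ∀ p ∈ (Finset.range (d + 1 + 1) ×ˢ Finset.range (s + 1)).filter
      (fun p => p.1 + p.2 = n),
      (((d + 1 : ℕ) : ℝ) - p.1) * alpha (d + 1) s μ p.1 p.2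
        = (((d : ℝ) + 1) * μ ^ n * (1 - μ) ^ (d + 1 + s - n)) *
          ((d.choose p.1 : ℝ) * (s.choose p.2 : ℝ)) := by
    rintro ⟨u, v⟩ hp
    simp only [mem_filter, mem_product, mem_range] at hp
    obtain ⟨⟨hu, hv⟩, rfl⟩ := hp
    have hexp : d + 1 + s - (u + v) = (d + 1 - u) + (s - v) := by omega
    have habs := sub_mul_choose_succ d u
    simp only [alpha]
    rw [hexp, pow_add, pow_add]
    push_cast
    linear_combination (μ ^ u * (1 - μ) ^ (d + 1 - u) *
      ((s.choose v : ℝ) * μ ^ v * (1 - μ) ^ (s - v))) * habs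
  rw [Finset.sum_congr rfl hterm, ← Finset.mul_sum, sum_box_choose_mul_choose]
  have habs := sub_mul_choose_succ (d + s) n
  rw [show d + s + 1 = d + 1 + s by omega] at habs
  have hpos : (d : ℝ) + 1 + s ≠ 0 := by positivity
  push_cast at habs ⊢
  field_simp
  linear_combination (-(1 - μ) ^ (d + 1 + s - n)) * habs
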